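/- Let X = {a, b} and V₃ ⊆ X* be the least language satisfying V₃ = {a} ∪ {b}·V₃·V₃·V₃. Then the ω-language F₂ := X^ω \ V₃·X^ω is closed and nowhere dense in the Cantor space X^ω, has equidistribution measure μ₌(F₂) = (3 − √5)/2 > 0, and does not have the Automatic Baire property. -/

import Mathlib

open Set MeasureTheory Computability

namespace AutoBaire

/-- The Cantor topology on the space of ω-words over `X`:
the product of the discrete topology on `X`. -/
def cantorTop (X : Type) : TopologicalSpace (ℕ → X) :=
  @Pi.topologicalSpace ℕ (fun _ => X) (fun _ => ⊥)

/-- The Borel σ-algebra of the Cantor space. -/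
def cantorBorel (X : Type) : MeasurableSpace (ℕ → X) :=
  @borel (ℕ → X) (cantorTop X)

variable {X : Type}

/-- Concatenation `w·ξ` of a finite word with an ω-word. -/
def wcat (w : List X) (ξ : ℕ → X) : ℕ → X :=
  Stream'.appendStream' w ξ

/-- The ball (cylinder) `w·X^ω`. -/
def cyl (w : List X) : Set (ℕ → X) := {ξ | ∃ η : ℕ → X, ξ = wcat w η}

/-- The ω-language `W·A` for a language `W` and an ω-language `A`. -/
def catOmega (W : Language X) (A : Set (ℕ → X)) : Set (ℕ → X) :=
  {ξ | ∃ w ∈ W, ∃ η ∈ A, ξ = wcat w η}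

/-- `V^ω`: the set of ω-words that are infinite concatenations
`v₁·v₂·⋯` of non-empty words `vᵢ ∈ V`. -/
def omegaPow (V : Language X) : Set (ℕ → X) :=
  {ξ | ∃ f : ℕ → List X, (∀ i, f i ∈ V ∧ f i ≠ []) ∧
    ∀ k, ξ ∈ cyl (((List.range k).map f).flatten)}

/-- Regular languages: those obtained from finite languages via the operations
union, concatenation and star. -/
inductive IsRegLang : Language X → Prop
  | finite (W : Language X) : (W : Set (List X)).Finite → IsRegLang W
  | union (W V : Language X) : IsRegLang W → IsRegLang V → IsRegLang (W + V)
  | concat (W V : Language X) : IsRegLang W → IsRegLang V → IsRegLang (W * V)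
  | star (W : Language X) : IsRegLang W → IsRegLang (W∗)

/-- Regular ω-languages: finite unions `⋃ᵢ Wᵢ·Vᵢ^ω` with `Wᵢ, Vᵢ` regular. -/
def IsRegOmega (F : Set (ℕ → X)) : Prop :=
  ∃ (n : ℕ) (W V : Fin n → Language X),
    (∀ i, IsRegLang (W i) ∧ IsRegLang (V i)) ∧
    F = ⋃ i, catOmega (W i) (omegaPow (V i))

/-- `X*·w·X^ω`: the set of ω-words containing `w` as an infix. -/
def infixOcc (w : List X) : Set (ℕ → X) :=
  {ξ | ∃ u : List X, ξ ∈ cyl (u ++ w)}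

/-- An ω-word is disjunctive if every finite word occurs in it as an infix. -/
def Disjunctive (ξ : ℕ → X) : Prop := ∀ w : List X, ξ ∈ infixOcc w

/-- Ultimately periodic ω-words: `ξ = w·v·v·v·⋯` with `v ≠ e`. -/
def UltPeriodic (ξ : ℕ → X) : Prop :=
  ∃ (w v : List X) (h : v ≠ []), ξ = wcat w (Stream'.cycle v h)

/-- The Automatic Baire property: `F Δ E ⊆ F'` for some regular open
ω-language `E` and some regular ω-language `F'` of first Baire category. -/
def HasABP (F : Set (ℕ → X)) : Prop :=
  ∃ E F' : Set (ℕ → X),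
    IsRegOmega E ∧ @IsOpen _ (cantorTop X) E ∧
    IsRegOmega F' ∧ @IsMeagre _ (cantorTop X) F' ∧
    symmDiff F E ⊆ F'

/-- The measure is finite and non-null: `0 < μ(X^ω) < ∞`. -/
def FiniteNonNull (μ : @MeasureTheory.Measure (ℕ → X) (cantorBorel X)) : Prop :=
  0 < μ Set.univ ∧ μ Set.univ < ⊤

/-- `supp(μ) = X^ω`: every non-empty open set has positive measure. -/
def FullSupport (μ : @MeasureTheory.Measure (ℕ → X) (cantorBorel X)) : Prop :=
  ∀ U : Set (ℕ → X), @IsOpen _ (cantorTop X) U → U.Nonempty → 0 < μ U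

/-- The balance condition: there is `c > 0` such that for all `w ∈ X*`, `x ∈ X`
either `μ(wx·X^ω) = 0` or `c·μ(w·X^ω) ≤ μ(wx·X^ω)`. -/
def Balanced (μ : @MeasureTheory.Measure (ℕ → X) (cantorBorel X)) : Prop :=
  ∃ c : ENNReal, 0 < c ∧ ∀ (w : List X) (x : X),
    μ (cyl (w ++ [x])) = 0 ∨ c * μ (cyl w) ≤ μ (cyl (w ++ [x]))


/-- The fixed-point equation `V = {a} ∪ {b}·V·V·V`. -/
def V3Eq (a b : X) (V : Language X) : Prop :=
  ∀ u : List X, u ∈ V ↔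
    (u = [a] ∨ ∃ v₁ ∈ V, ∃ v₂ ∈ V, ∃ v₃ ∈ V, u = [b] ++ v₁ ++ v₂ ++ v₃)

/-!
A regular ω-language containing a disjunctive word is not meagre: if `W·V^ω` contains a disjunctive
word, then every word is an infix of a word of `V*`, and since the regular language `V*` has only
finitely many left quotients, some word `w` has the property that all its extensions are prefixes of
words of `V*`. This lets one build inside `W·V^ω` a point of any given residual set. Consequently a
meagre set with the Automatic Baire property contains no disjunctive word.

A word of `V₃` encodes a ternary tree with leaves `a` and inner nodes `b`. Every finite word extends
to one having a prefix in `V₃`, so `F₂` is nowhere dense. On the other hand a word of `V₃` has more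
`a` than `b`, so any disjunctive word padded with enough letters `b` lies in `F₂`.

The trees of depth at most `n` have total weight `fⁿ(0)` with `f(x) = (1 + x³)/2`, and these weights
converge to the least non-negative fixed point `1/φ` of `f`, where `φ` is the golden ratio.
-/

section Regular

theorem cons_mem_mul_iff {L M : Language X} {x : X} {y : List X} :
    x :: y ∈ L * M ↔ y ∈ L.leftQuotient [x] * M ∨ [] ∈ L ∧ x :: y ∈ M := by
  simp only [Language.mem_mul, Language.mem_leftQuotient, List.cons_append, List.nil_append]
  constructor
  · rintro ⟨_ | ⟨z, u⟩, hu, v, hv, huv⟩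
    · exact .inr ⟨hu, huv ▸ hv⟩
    · obtain ⟨rfl, rfl⟩ := List.cons.inj huv
      exact .inl ⟨u, hu, v, hv, rfl⟩
  · rintro (⟨u, hu, v, hv, rfl⟩ | ⟨hnil, hy⟩)
    · exact ⟨x :: u, hu, v, hv, rfl⟩
    · exact ⟨[], hnil, x :: y, hy, rfl⟩

theorem append_mem_kstar {L : Language X} {u v : List X} (hu : u ∈ L) (hv : v ∈ L∗) :
    u ++ v ∈ L∗ := by
  obtain ⟨S, rfl, hS⟩ := Language.mem_kstar.1 hv
  exact Language.join_mem_kstar (L := u :: S) (List.forall_mem_cons.2 ⟨hu, hS⟩)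

theorem exists_append_of_mem_kstar {L : Language X} {x : List X} (hx : x ∈ L∗) (hne : x ≠ []) :
    ∃ u ∈ L, u ≠ [] ∧ ∃ v ∈ L∗, x = u ++ v := by
  obtain ⟨_ | ⟨u, S⟩, rfl, hS⟩ := Language.mem_kstar_iff_exists_nonempty.1 hx
  · exact absurd rfl hne
  · obtain ⟨⟨hu, hu_ne⟩, hS⟩ := List.forall_mem_cons.1 hS
    exact ⟨u, hu, hu_ne, S.flatten, Language.join_mem_kstar fun v hv => (hS v hv).1, rfl⟩

theorem cons_mem_kstar_iff {L : Language X} {x : X} {y : List X} :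
    x :: y ∈ L∗ ↔ y ∈ L.leftQuotient [x] * L∗ := by
  simp only [Language.mem_mul, Language.mem_leftQuotient, List.cons_append, List.nil_append]
  constructor
  · intro h
    obtain ⟨_ | ⟨z, u⟩, hu, hu_ne, v, hv, huv⟩ :=
      exists_append_of_mem_kstar h (List.cons_ne_nil x y)
    · exact absurd rfl hu_ne
    · obtain ⟨rfl, rfl⟩ := List.cons.inj huv
      exact ⟨u, hu, v, hv, rfl⟩
  · rintro ⟨u, hu, v, hv, rfl⟩
    exact append_mem_kstar hu hv

/-- A set of languages closed under partial derivatives in the sense of Antimirov: the quotient of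
a member by a letter is a union of members. -/
def IsDerivativeClosed (S : Set (Language X)) : Prop :=
  ∀ L ∈ S, ∀ x, ∃ T ⊆ S, ∀ y, x :: y ∈ L ↔ ∃ M ∈ T, y ∈ M

theorem IsDerivativeClosed.exists_append_mem_iff {S : Set (Language X)}
    (hS : IsDerivativeClosed S) (w : List X) {L : Language X} (hL : L ∈ S) :
    ∃ T ⊆ S, ∀ y, w ++ y ∈ L ↔ ∃ M ∈ T, y ∈ M := by
  induction w generalizing L with
  | nil => exact ⟨{L}, Set.singleton_subset_iff.2 hL, fun y => by simp⟩
  | cons x w ih =>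
    obtain ⟨T, hT, hx⟩ := hS L hL x
    choose D hD hw using fun M : T => ih (hT M.2)
    refine ⟨⋃ M, D M, Set.iUnion_subset hD, fun y => ?_⟩
    rw [List.cons_append, hx]
    simp only [Set.mem_iUnion]
    exact ⟨fun ⟨M, hM, hy⟩ => have ⟨N, hN, hyN⟩ := (hw ⟨M, hM⟩ y).1 hy; ⟨N, ⟨_, hN⟩, hyN⟩,
      fun ⟨N, ⟨M, hN⟩, hy⟩ => ⟨M, M.2, (hw M y).2 ⟨N, hN, hy⟩⟩⟩

theorem IsDerivativeClosed.isRegular {S : Set (Language X)} (hS : IsDerivativeClosed S)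
    (hfin : S.Finite) {L : Language X} (hL : L ∈ S) : L.IsRegular := by
  refine .of_finite_range_leftQuotient <|
    (hfin.powerset.image fun T => ({y | ∃ M ∈ T, y ∈ M} : Language X)).subset ?_
  rintro _ ⟨w, rfl⟩
  obtain ⟨T, hT, hw⟩ := hS.exists_append_mem_iff w hL
  exact ⟨T, hT, Set.ext fun y => (hw y).symm⟩

theorem leftQuotient_singleton_mem_range {L M : Language X} (hM : M ∈ range L.leftQuotient)
    (x : X) : M.leftQuotient [x] ∈ range L.leftQuotient := by
  obtain ⟨w, rfl⟩ := hM
  exact ⟨w ++ [x], L.leftQuotient_append w [x]⟩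

theorem isRegular_of_finite {L : Language X} (hL : (L : Set (List X)).Finite) : L.IsRegular := by
  have hfin : (⋃ u ∈ (L : Set (List X)), {v | v <:+ u}).Finite :=
    hL.biUnion fun u _ => u.tails.finite_toSet.subset fun v hv => (List.mem_tails _ _).2 hv
  refine .of_finite_range_leftQuotient (hfin.powerset.subset ?_)
  rintro _ ⟨w, rfl⟩ v hv
  exact Set.mem_biUnion (Language.mem_leftQuotient w v |>.1 hv) (List.suffix_append w v)

theorem isRegular_mul {L M : Language X} (hL : L.IsRegular) (hM : M.IsRegular) :
    (L * M).IsRegular := by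
  let S := (fun A => A * M) '' range L.leftQuotient ∪ range M.leftQuotient
  have hS : IsDerivativeClosed S := by
    rintro _ (⟨A, hA, rfl⟩ | hA) x
    · refine ⟨{A.leftQuotient [x] * M} ∪ {B | [] ∈ A ∧ B = M.leftQuotient [x]}, ?_, fun y => ?_⟩
      · rintro _ (rfl | ⟨-, rfl⟩)
        · exact .inl ⟨_, leftQuotient_singleton_mem_range hA x, rfl⟩
        · exact .inr ⟨[x], rfl⟩
      · simp [cons_mem_mul_iff, or_and_right, exists_or, and_assoc]
    · exact ⟨{_}, Set.singleton_subset_iff.2 (.inr (leftQuotient_singleton_mem_range hA x)),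
        fun y => by simp⟩
  exact hS.isRegular ((hL.finite_range_leftQuotient.image _).union hM.finite_range_leftQuotient)
    (.inl ⟨L, ⟨[], rfl⟩, rfl⟩)

theorem isRegular_kstar {L : Language X} (hL : L.IsRegular) : (L∗).IsRegular := by
  let S := insert L∗ ((fun A => A * L∗) '' range L.leftQuotient)
  have hquot {A} (hA : A ∈ range L.leftQuotient) (x : X) : A.leftQuotient [x] * L∗ ∈ S :=
    .inr ⟨_, leftQuotient_singleton_mem_range hA x, rfl⟩
  have hS : IsDerivativeClosed S := by
    rintro _ (rfl | ⟨A, hA, rfl⟩) x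
    · exact ⟨{_}, Set.singleton_subset_iff.2 (hquot ⟨[], rfl⟩ x),
        fun y => by simp [cons_mem_kstar_iff]⟩
    · refine ⟨{A.leftQuotient [x] * L∗} ∪ {B | [] ∈ A ∧ B = L.leftQuotient [x] * L∗}, ?_,
        fun y => ?_⟩
      · rintro _ (rfl | ⟨-, rfl⟩)
        exacts [hquot hA x, hquot ⟨[], rfl⟩ x]
      · simp [cons_mem_mul_iff, cons_mem_kstar_iff, or_and_right, exists_or, and_assoc]
  exact hS.isRegular ((hL.finite_range_leftQuotient.image _).insert _) (.inl rfl)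

theorem IsRegLang.isRegular {L : Language X} (hL : IsRegLang L) : L.IsRegular := by
  induction hL with
  | finite _ hfin => exact isRegular_of_finite hfin
  | union _ _ _ _ ihL ihM => exact ihL.add ihM
  | concat _ _ _ _ ihL ihM => exact isRegular_mul ihL ihM
  | star _ _ ih => exact isRegular_kstar ih

theorem exists_dense_prefix_of_isRegular {L : Language X} (hL : L.IsRegular)
    (hinfix : ∀ u, ∃ x y, x ++ u ++ y ∈ L) : ∃ w, ∀ y, ∃ z, w ++ y ++ z ∈ L := by
  by_contra! hdead
  -- A word killing every left quotient is built by killing one quotient after the other.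
  suffices ∀ S ⊆ range L.leftQuotient, S.Finite → ∃ u, ∀ M ∈ S, ∀ z, u ++ z ∉ M by
    obtain ⟨u, hu⟩ := this _ subset_rfl hL.finite_range_leftQuotient
    obtain ⟨x, y, hxy⟩ := hinfix u
    exact hu _ ⟨x, rfl⟩ y (by simpa using hxy)
  intro S hsub hS
  induction S, hS using Set.Finite.induction_on with
  | empty => exact ⟨[], by simp⟩
  | @insert M S _ _ ih =>
    obtain ⟨u, hu⟩ := ih ((Set.subset_insert M S).trans hsub)
    obtain ⟨x, rfl⟩ := hsub (Set.mem_insert M S)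
    obtain ⟨y, hy⟩ := hdead (x ++ u)
    refine ⟨u ++ y, Set.forall_mem_insert.2 ⟨fun z => ?_, fun M hM z => ?_⟩⟩
    · simpa using hy z
    · simpa using hu M hM (y ++ z)

end Regular

section Words

theorem wcat_append (u v : List X) (ξ : ℕ → X) : wcat (u ++ v) ξ = wcat u (wcat v ξ) :=
  Stream'.append_append_stream u v ξ

theorem wcat_injective (w : List X) : Function.Injective (wcat w) := fun _ _ =>
  Stream'.append_right_injective w _ _

theorem wcat_mem_cyl (w : List X) (ξ : ℕ → X) : wcat w ξ ∈ cyl w := ⟨ξ, rfl⟩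

@[simp] theorem cyl_nil : cyl ([] : List X) = univ := eq_univ_of_forall (wcat_mem_cyl [])

theorem cyl_nonempty [Nonempty X] (w : List X) : (cyl w).Nonempty :=
  ⟨_, wcat_mem_cyl w fun _ => Classical.arbitrary X⟩

theorem wcat_mem_cyl_append_iff {u v : List X} {ξ : ℕ → X} :
    wcat u ξ ∈ cyl (u ++ v) ↔ ξ ∈ cyl v := by
  simp only [cyl, mem_ofPred_eq, wcat_append, (wcat_injective u).eq_iff]

theorem cyl_anti {u v : List X} (h : u <+: v) : cyl v ⊆ cyl u := by
  obtain ⟨w, rfl⟩ := h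
  rintro _ ⟨ξ, rfl⟩
  exact ⟨wcat w ξ, wcat_append u w ξ⟩

theorem mem_cyl_iff {w : List X} {ξ : ℕ → X} : ξ ∈ cyl w ↔ ∀ i (hi : i < w.length), w[i] = ξ i := by
  constructor
  · rintro ⟨η, rfl⟩ i hi
    exact (Stream'.get_append_left i w η hi).symm
  · intro h
    have htake : Stream'.take w.length ξ = w := List.ext_getElem (Stream'.length_take _ _)
      fun i _ hi => (Stream'.take_get _ _ _ _).trans (h i hi).symm
    exact ⟨Stream'.drop w.length ξ, (Stream'.append_take_drop w.length ξ).symm.trans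
      (congrArg (Stream'.appendStream' · _) htake)⟩

theorem prefix_of_mem_cyl {u v : List X} {ξ : ℕ → X} (hu : ξ ∈ cyl u) (hv : ξ ∈ cyl v)
    (h : u.length ≤ v.length) : u <+: v :=
  List.prefix_iff_getElem.2 ⟨h, fun i hi =>
    (mem_cyl_iff.1 hu i hi).trans (mem_cyl_iff.1 hv i (hi.trans_le h)).symm⟩

theorem prefix_or_prefix_of_mem_cyl {u v : List X} {ξ : ℕ → X} (hu : ξ ∈ cyl u)
    (hv : ξ ∈ cyl v) : u <+: v ∨ v <+: u :=
  (Nat.le_total u.length v.length).imp (prefix_of_mem_cyl hu hv) (prefix_of_mem_cyl hv hu)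

theorem disjoint_cyl {u v : List X} (huv : ¬ u <+: v) (hvu : ¬ v <+: u) :
    Disjoint (cyl u) (cyl v) :=
  Set.disjoint_left.2 fun _ hu hv => (prefix_or_prefix_of_mem_cyl hu hv).elim huv hvu

/-- The finite concatenation `f 0 · f 1 ⋯ f (k - 1)`, in the form in which it occurs in
`omegaPow`. -/
def concatRange (f : ℕ → List X) (k : ℕ) : List X := ((List.range k).map f).flatten

theorem concatRange_succ (f : ℕ → List X) (k : ℕ) :
    concatRange f (k + 1) = concatRange f k ++ f k := by
  simp [concatRange, List.range_succ]

theorem concatRange_succ' (f : ℕ → List X) (k : ℕ) :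
    concatRange f (k + 1) = f 0 ++ concatRange (fun n => f (n + 1)) k := by
  simp [concatRange, List.range_succ_eq_map, Function.comp_def]

theorem concatRange_prefix (f : ℕ → List X) {k l : ℕ} (h : k ≤ l) :
    concatRange f k <+: concatRange f l :=
  Nat.le_induction List.prefix_rfl
    (fun l _ ih => ih.trans (concatRange_succ f l ▸ List.prefix_append _ _)) l h

theorem le_length_concatRange {f : ℕ → List X} (hf : ∀ i, f i ≠ []) (k : ℕ) :
    k ≤ (concatRange f k).length := by
  induction k with
  | zero => exact Nat.zero_le _
  | succ k ih =>
    rw [concatRange_succ, List.length_append]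
    exact Nat.add_le_add ih (List.length_pos_iff.2 (hf k))

theorem exists_forall_mem_cyl_concatRange {f : ℕ → List X} (hf : ∀ i, f i ≠ []) :
    ∃ ξ, ∀ k, ξ ∈ cyl (concatRange f k) := by
  refine ⟨fun n => (concatRange f (n + 1))[n]'(le_length_concatRange hf (n + 1)), fun k => ?_⟩
  refine mem_cyl_iff.2 fun n hn => ?_
  rcases Nat.le_total (n + 1) k with h | h
  · exact ((concatRange_prefix f h).getElem _).symm
  · exact (concatRange_prefix f h).getElem hn

theorem exists_forall_concatRange {P : ℕ → List X → List X → Prop}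
    (hP : ∀ n p, ∃ y, P n p y) (u : List X) :
    ∃ f : ℕ → List X, ∀ n, P n (u ++ concatRange f n) (f n) := by
  choose g hg using hP
  let p : ℕ → List X := Nat.rec u fun n q => q ++ g n q
  have hp (n) : u ++ concatRange (fun n => g n (p n)) n = p n := by
    induction n with
    | zero => exact List.append_nil u
    | succ n ih => rw [concatRange_succ, ← List.append_assoc, ih]
  exact ⟨fun n => g n (p n), fun n => (hp n).symm ▸ hg n (p n)⟩

end Words

section OmegaPow

theorem subset_omegaPow_of_forall_exists {V : Language X} {A : Set (ℕ → X)}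
    (hA : ∀ ξ ∈ A, ∃ v ∈ V, v ≠ [] ∧ ∃ ζ ∈ A, ξ = wcat v ζ) : A ⊆ omegaPow V := by
  choose v hv hne next hnext hcat using fun ξ : A => hA ξ ξ.2
  let tail : A → A := fun ξ => ⟨next ξ, hnext ξ⟩
  intro ξ hξ
  let f : ℕ → List X := fun n => v (tail^[n] ⟨ξ, hξ⟩)
  refine ⟨f, fun n => ⟨hv _, hne _⟩, fun k => ⟨tail^[k] ⟨ξ, hξ⟩, ?_⟩⟩
  change ξ = wcat (concatRange f k) _
  induction k with
  | zero => rfl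
  | succ k ih =>
    rw [concatRange_succ, wcat_append, Function.iterate_succ_apply']
    exact ih.trans (congrArg _ (hcat _))

theorem exists_of_mem_omegaPow {V : Language X} {ξ : ℕ → X} (hξ : ξ ∈ omegaPow V) :
    ∃ v ∈ V, v ≠ [] ∧ ∃ ζ ∈ omegaPow V, ξ = wcat v ζ := by
  obtain ⟨f, hf, hcyl⟩ := hξ
  obtain ⟨ζ, rfl⟩ : ξ ∈ cyl (f 0) := by simpa using hcyl 1
  refine ⟨f 0, (hf 0).1, (hf 0).2, ζ, ⟨fun n => f (n + 1), fun n => hf (n + 1), fun k => ?_⟩, rfl⟩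
  have hk := hcyl (k + 1)
  rwa [← concatRange, concatRange_succ', wcat_mem_cyl_append_iff] at hk

theorem mem_omegaPow_iff {V : Language X} {ξ : ℕ → X} :
    ξ ∈ omegaPow V ↔ ∃ v ∈ V, v ≠ [] ∧ ∃ ζ ∈ omegaPow V, ξ = wcat v ζ := by
  refine ⟨exists_of_mem_omegaPow, fun hξ => subset_omegaPow_of_forall_exists
    (A := {ξ | ∃ v ∈ V, v ≠ [] ∧ ∃ ζ ∈ omegaPow V, ξ = wcat v ζ}) ?_ hξ⟩
  rintro _ ⟨v, hv, hne, ζ, hζ, rfl⟩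
  exact ⟨v, hv, hne, ζ, exists_of_mem_omegaPow hζ, rfl⟩

theorem omegaPow_kstar_subset (V : Language X) : omegaPow V∗ ⊆ omegaPow V := by
  refine subset_omegaPow_of_forall_exists fun ξ hξ => ?_
  obtain ⟨u, hu, hne, ζ, hζ, rfl⟩ := exists_of_mem_omegaPow hξ
  obtain ⟨v, hv, hv_ne, s, hs, rfl⟩ := exists_append_of_mem_kstar hu hne
  refine ⟨v, hv, hv_ne, wcat s ζ, ?_, wcat_append v s ζ⟩
  rcases eq_or_ne s [] with rfl | hs_ne
  · exact hζ
  · exact mem_omegaPow_iff.2 ⟨s, hs, hs_ne, ζ, hζ, rfl⟩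

theorem concatRange_mem_kstar {V : Language X} {f : ℕ → List X} (hf : ∀ i, f i ∈ V) (k : ℕ) :
    concatRange f k ∈ V∗ :=
  Language.join_mem_kstar (List.forall_mem_map.2 fun i _ => hf i)

end OmegaPow

section Disjunctive

theorem Disjunctive.of_wcat {w : List X} {ξ : ℕ → X} (h : Disjunctive (wcat w ξ)) :
    Disjunctive ξ := by
  intro u
  -- Any occurrence of the padded word below ends in an occurrence of `u` beyond `w`.
  obtain ⟨s, hs⟩ := h (List.replicate w.length (ξ 0) ++ u)
  have hs : wcat w ξ ∈ cyl (s ++ List.replicate w.length (ξ 0) ++ u) := by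
    rwa [List.append_assoc]
  obtain ⟨t, ht⟩ := prefix_of_mem_cyl (wcat_mem_cyl w ξ)
    (cyl_anti (List.prefix_append _ u) hs) (by simp)
  rw [← ht, List.append_assoc, wcat_mem_cyl_append_iff] at hs
  exact ⟨t, hs⟩

theorem Disjunctive.exists_append_mem_kstar {V : Language X} {ξ : ℕ → X} (h : Disjunctive ξ)
    (hξ : ξ ∈ omegaPow V) (u : List X) : ∃ x y, x ++ u ++ y ∈ V∗ := by
  obtain ⟨f, hf, hcyl⟩ := hξ
  obtain ⟨x, hx⟩ := h u
  obtain ⟨y, hy⟩ := prefix_of_mem_cyl hx (hcyl (x ++ u).length)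
    (le_length_concatRange (fun i => (hf i).2) _)
  exact ⟨x, y, hy ▸ concatRange_mem_kstar (fun i => (hf i).1) _⟩

/-- Ballot words: every prefix contains at least as many letters `b` as letters `a`. Their infinite
concatenations avoid `V₃`, whose words contain more letters `a` than letters `b`. -/
def IsBallot [DecidableEq X] (a b : X) (u : List X) : Prop := ∀ p, p <+: u → p.count a ≤ p.count b

theorem IsBallot.append [DecidableEq X] {a b : X} {u v : List X} (hu : IsBallot a b u)
    (hv : IsBallot a b v) : IsBallot a b (u ++ v) := by
  intro p hp
  rcases List.prefix_or_prefix_of_prefix hp (List.prefix_append u v) with h | ⟨q, rfl⟩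
  · exact hu p h
  · simp only [List.count_append]
    exact Nat.add_le_add (hu u List.prefix_rfl) (hv q ((List.prefix_append_right_inj u).1 hp))

theorem isBallot_replicate_append [DecidableEq X] {a b : X} (hab : a ≠ b) {n : ℕ} {u : List X}
    (hn : u.length ≤ n) : IsBallot a b (List.replicate n b ++ u) := by
  intro p hp
  rcases List.prefix_or_prefix_of_prefix hp (List.prefix_append _ u) with h | h
  · have ha : a ∉ p := fun ha => hab (List.eq_of_mem_replicate (h.subset ha))
    simp [List.count_eq_zero_of_not_mem ha]
  · calc p.count a ≤ (List.replicate n b ++ u).count a := hp.sublist.count_le a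
      _ = u.count a := by simp [List.count_replicate, hab.symm]
      _ ≤ u.length := List.count_le_length
      _ ≤ n := hn
      _ = (List.replicate n b).count b := List.count_replicate_self.symm
      _ ≤ p.count b := h.sublist.count_le b

theorem isBallot_concatRange [DecidableEq X] {a b : X} {f : ℕ → List X}
    (hf : ∀ i, IsBallot a b (f i)) (k : ℕ) : IsBallot a b (concatRange f k) := by
  induction k with
  | zero => exact fun p hp => by simp [List.prefix_nil.1 hp]
  | succ k ih => exact concatRange_succ f k ▸ ih.append (hf k)

theorem exists_disjunctive_forall_isBallot [DecidableEq X] [Countable X] {a b : X} (hab : a ≠ b) :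
    ∃ ξ : ℕ → X, Disjunctive ξ ∧ ∀ p, ξ ∈ cyl p → IsBallot a b p := by
  have : Nonempty (List X) := ⟨[]⟩
  obtain ⟨e, he⟩ := exists_surjective_nat (List X)
  let f : ℕ → List X := fun n => List.replicate ((e n).length + 1) b ++ e n
  have hne (n) : f n ≠ [] := by simp [f]
  obtain ⟨ξ, hξ⟩ := exists_forall_mem_cyl_concatRange hne
  refine ⟨ξ, fun w => ?_, fun p hp q hq => ?_⟩
  · obtain ⟨n, rfl⟩ := he w
    refine ⟨concatRange f n ++ List.replicate ((e n).length + 1) b, ?_⟩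
    rw [List.append_assoc, ← concatRange_succ]
    exact hξ (n + 1)
  · exact isBallot_concatRange (fun i => isBallot_replicate_append hab (Nat.le_succ _)) p.length q
      (hq.trans (prefix_of_mem_cyl hp (hξ _) (le_length_concatRange hne _)))

end Disjunctive

section TernaryTreeCodes

theorem sum_pow_length_image₂_append {R : Type*} [CommSemiring R] [DecidableEq X]
    {A : Finset (List X)} (hA : IsAntichain (· <+: ·) (A : Set (List X))) (B : Finset (List X))
    (r : R) :
    ∑ u ∈ Finset.image₂ (· ++ ·) A B, r ^ u.length =
      (∑ u ∈ A, r ^ u.length) * ∑ u ∈ B, r ^ u.length := by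
  rw [← Finset.image_uncurry_product, Finset.sum_image, Finset.sum_product,
    Finset.sum_mul_sum]
  · simp [pow_add]
  · rintro ⟨u, x⟩ hu ⟨v, y⟩ hv (h : u ++ x = v ++ y)
    have huA : u ∈ A := (Finset.mem_product.1 hu).1
    have hvA : v ∈ A := (Finset.mem_product.1 hv).1
    obtain rfl : u = v :=
      (List.prefix_or_prefix_of_prefix (List.prefix_append u x) (h ▸ List.prefix_append v y)).elim
        (hA.eq huA hvA) fun hvu => (hA.eq hvA huA hvu).symm
    rw [List.append_cancel_left h]

variable {a b : X} {V : Language X}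

theorem V3Eq.singleton_mem (hV : V3Eq a b V) : [a] ∈ V := (hV _).2 (.inl rfl)

theorem V3Eq.cons_append_mem (hV : V3Eq a b V) {u v w : List X} (hu : u ∈ V) (hv : v ∈ V)
    (hw : w ∈ V) : b :: (u ++ v ++ w) ∈ V :=
  (hV _).2 (.inr ⟨u, hu, v, hv, w, hw, rfl⟩)

@[elab_as_elim]
theorem V3Eq.induction (hV : V3Eq a b V) {P : ∀ u, u ∈ V → Prop}
    (leaf : P [a] hV.singleton_mem)
    (node : ∀ u v w (hu : u ∈ V) (hv : v ∈ V) (hw : w ∈ V), P u hu → P v hv → P w hw →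
      P (b :: (u ++ v ++ w)) (hV.cons_append_mem hu hv hw))
    {t : List X} (ht : t ∈ V) : P t ht := by
  induction hn : t.length using Nat.strong_induction_on generalizing t with
  | _ n ih =>
    subst hn
    rcases (hV t).1 ht with rfl | ⟨u, hu, v, hv, w, hw, rfl⟩
    · exact leaf
    · refine node u v w hu hv hw (ih _ ?_ hu rfl) (ih _ ?_ hv rfl) (ih _ ?_ hw rfl) <;>
        simp only [List.length_cons, List.length_append] <;> lia

theorem V3Eq.count_eq [DecidableEq X] (hV : V3Eq a b V) (hab : a ≠ b) {u : List X} (hu : u ∈ V) :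
    u.count a = 2 * u.count b + 1 := by
  induction hu using hV.induction with
  | leaf => simp [hab]
  | node u v w _ _ _ ihu ihv ihw =>
    simp only [List.count_cons, List.count_append, ihu, ihv, ihw, beq_self_eq_true,
      beq_iff_eq, hab.symm, if_true, if_false]
    ring

theorem V3Eq.append_inj (hV : V3Eq a b V) (hab : a ≠ b) {u v x y : List X} (hu : u ∈ V)
    (hv : v ∈ V) (h : u ++ x = v ++ y) : u = v ∧ x = y := by
  induction hu using hV.induction generalizing v x y with
  | leaf =>
    rcases (hV v).1 hv with rfl | ⟨v₁, -, v₂, -, v₃, -, rfl⟩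
    · exact ⟨rfl, List.append_cancel_left h⟩
    · exact absurd (List.cons.inj h).1 hab
  | node u₁ u₂ u₃ _ _ _ ih₁ ih₂ ih₃ =>
    rcases (hV v).1 hv with rfl | ⟨v₁, hv₁, v₂, hv₂, v₃, hv₃, rfl⟩
    · exact absurd (List.cons.inj h).1 hab.symm
    · simp only [List.cons_append, List.append_assoc, List.nil_append, List.cons.injEq,
        true_and] at h
      obtain ⟨rfl, h₁⟩ := ih₁ hv₁ h
      obtain ⟨rfl, h₂⟩ := ih₂ hv₂ h₁
      obtain ⟨rfl, h₃⟩ := ih₃ hv₃ h₂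
      exact ⟨rfl, h₃⟩

theorem V3Eq.isAntichain (hV : V3Eq a b V) (hab : a ≠ b) :
    IsAntichain (· <+: ·) (V : Set (List X)) := by
  rintro u hu v hv hne ⟨x, rfl⟩
  exact hne (hV.append_inj hab hu hv (List.append_nil _).symm).1

theorem V3Eq.not_isBallot [DecidableEq X] (hV : V3Eq a b V) (hab : a ≠ b) {u : List X}
    (hu : u ∈ V) : ¬ IsBallot a b u := fun h =>
  absurd (h u List.prefix_rfl) (by have := hV.count_eq hab hu; lia)

/-- The words of `V₃` whose parse tree has depth at most `n`, over letters `a` and `b`. They exhaust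
`V₃` by finite sets of which the measure can be computed recursively. -/
def depthStage [DecidableEq X] (a b : X) : ℕ → Finset (List X)
  | 0 => ∅
  | n + 1 =>
    let S := depthStage a b n
    insert [a] ((Finset.image₂ (· ++ ·) S (Finset.image₂ (· ++ ·) S S)).image (b :: ·))

theorem mem_depthStage_succ [DecidableEq X] {n : ℕ} {t : List X} :
    t ∈ depthStage a b (n + 1) ↔ t = [a] ∨ ∃ u ∈ depthStage a b n, ∃ v ∈ depthStage a b n,
      ∃ w ∈ depthStage a b n, t = b :: (u ++ v ++ w) := by
  simp [depthStage, Finset.mem_image₂, and_assoc, eq_comm]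

theorem monotone_depthStage [DecidableEq X] : Monotone (depthStage a b) := by
  refine monotone_nat_of_le_succ fun n => ?_
  induction n with
  | zero => exact Finset.empty_subset _
  | succ n ih =>
    intro t ht
    obtain rfl | ⟨u, hu, v, hv, w, hw, rfl⟩ := mem_depthStage_succ.1 ht
    · exact mem_depthStage_succ.2 (.inl rfl)
    · exact mem_depthStage_succ.2 (.inr ⟨u, ih hu, v, ih hv, w, ih hw, rfl⟩)

theorem V3Eq.coe_depthStage_subset [DecidableEq X] (hV : V3Eq a b V) (n : ℕ) :
    (depthStage a b n : Set (List X)) ⊆ V := by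
  induction n with
  | zero => exact fun u hu => absurd hu (Finset.notMem_empty u)
  | succ n ih =>
    intro t ht
    obtain rfl | ⟨u, hu, v, hv, w, hw, rfl⟩ := mem_depthStage_succ.1 ht
    · exact hV.singleton_mem
    · exact hV.cons_append_mem (ih hu) (ih hv) (ih hw)

theorem V3Eq.exists_mem_depthStage [DecidableEq X] (hV : V3Eq a b V) {u : List X} (hu : u ∈ V) :
    ∃ n, u ∈ depthStage a b n := by
  induction hu using hV.induction with
  | leaf => exact ⟨1, mem_depthStage_succ.2 (.inl rfl)⟩
  | node u v w _ _ _ ihu ihv ihw =>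
    obtain ⟨k, hk⟩ := ihu
    obtain ⟨l, hl⟩ := ihv
    obtain ⟨m, hm⟩ := ihw
    refine ⟨max k (max l m) + 1, mem_depthStage_succ.2 (.inr ⟨u, ?_, v, ?_, w, ?_, rfl⟩)⟩
    exacts [monotone_depthStage (by simp) hk, monotone_depthStage (by simp) hl,
      monotone_depthStage (by simp) hm]

theorem V3Eq.sum_pow_length_depthStage {R : Type*} [CommSemiring R] [DecidableEq X]
    (hV : V3Eq a b V) (hab : a ≠ b) (r : R) (n : ℕ) :
    ∑ u ∈ depthStage a b n, r ^ u.length = (fun x => r + r * x ^ 3)^[n] 0 := by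
  induction n with
  | zero => rfl
  | succ n ih =>
    have hanti := (hV.isAntichain hab).subset (hV.coe_depthStage_subset n)
    rw [depthStage, Finset.sum_insert (by simp [hab.symm]),
      Finset.sum_image (List.cons_injective.injOn), Function.iterate_succ_apply', ← ih]
    simp only [List.length_cons, List.length_nil, pow_succ', ← Finset.mul_sum,
      sum_pow_length_image₂_append hanti]
    simp

end TernaryTreeCodes

section BinaryAlphabet

variable {V : Language Bool}

theorem V3Eq.cons_mem (hV : V3Eq false true V) {u : List Bool} (hu : u ∈ V ^ 3) :
    true :: u ∈ V := by
  obtain ⟨v, hv, w, hw, rfl⟩ := Language.mem_mul.1 (pow_succ V 2 ▸ hu)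
  obtain ⟨s, hs, t, ht, rfl⟩ := Language.mem_mul.1 (sq V ▸ hv)
  exact hV.cons_append_mem hs ht hw

-- Reading `false` completes one of the `n` pending words of `V`, reading `true` replaces it by
-- three pending words.
theorem V3Eq.exists_mem_pow_prefix (hV : V3Eq false true V) (w : List Bool) (n : ℕ) :
    ∃ u ∈ V ^ n, ∃ z, u <+: w ++ z := by
  induction w generalizing n with
  | nil =>
    have hleaf : ∀ u ∈ List.replicate n [false], u ∈ V := fun u hu =>
      List.eq_of_mem_replicate hu ▸ hV.singleton_mem
    exact ⟨_, Language.mem_pow.2 ⟨_, rfl, List.length_replicate, hleaf⟩, _, List.prefix_rfl⟩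
  | cons c w ih =>
    cases n with
    | zero => exact ⟨[], rfl, [], List.nil_prefix⟩
    | succ n =>
      cases c with
      | false =>
        obtain ⟨u, hu, z, hz⟩ := ih n
        refine ⟨[false] ++ u, ?_, z, List.cons_prefix_cons.2 ⟨rfl, hz⟩⟩
        rw [pow_succ']
        exact Language.append_mem_mul hV.singleton_mem hu
      | true =>
        obtain ⟨u, hu, z, hz⟩ := ih (3 + n)
        obtain ⟨t, ht, s, hs, rfl⟩ := Language.mem_mul.1 (pow_add V 3 n ▸ hu)
        refine ⟨(true :: t) ++ s, ?_, z, List.cons_prefix_cons.2 ⟨rfl, hz⟩⟩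
        rw [pow_succ']
        exact Language.append_mem_mul (hV.cons_mem ht) hs

end BinaryAlphabet

section FixedPoint

open Filter Topology goldenRatio

theorem tendsto_iterate_of_isLeast_fixedPt {α : Type*} [ConditionallyCompleteLinearOrder α]
    [TopologicalSpace α] [OrderTopology α] {f : α → α} {x a : α} (hf : Monotone f)
    (hcont : Continuous f) (hx : x ≤ f x) (ha : IsLeast {y | x ≤ y ∧ Function.IsFixedPt f y} a) :
    Tendsto (fun n => f^[n] x) atTop (𝓝 a) := by
  have hle (n) : f^[n] x ≤ a := by
    rw [← ha.1.2.iterate n]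
    exact hf.iterate n ha.1.1
  have hbdd : BddAbove (range fun n => f^[n] x) := ⟨a, forall_mem_range.2 hle⟩
  have hlim := tendsto_atTop_ciSup (hf.monotone_iterate_of_le_map hx) hbdd
  have hfixed := isFixedPt_of_tendsto_iterate hlim hcont.continuousAt
  rwa [← (ciSup_le hle).antisymm (ha.2 ⟨le_ciSup hbdd 0, hfixed⟩)]

theorem isLeast_fixedPt_inv_goldenRatio :
    IsLeast {y : ℝ | 0 ≤ y ∧ Function.IsFixedPt (fun x => 2⁻¹ + 2⁻¹ * x ^ 3) y} φ⁻¹ := by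
  have hquad : φ⁻¹ ^ 2 = 1 - φ⁻¹ := by
    rw [Real.inv_goldenRatio, neg_sq, Real.goldenConj_sq]
    ring
  have hpos : 0 < φ⁻¹ := inv_pos.2 Real.goldenRatio_pos
  refine ⟨⟨hpos.le, show 2⁻¹ + 2⁻¹ * φ⁻¹ ^ 3 = φ⁻¹ by linear_combination (φ⁻¹ - 1) / 2 * hquad⟩, ?_⟩
  rintro y ⟨hy, hfixed : 2⁻¹ + 2⁻¹ * y ^ 3 = y⟩
  have hfactor : (y - 1) * (y ^ 2 + y - 1) = 0 := by linear_combination 2 * hfixed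
  by_contra! hlt
  have hlin : y - 1 < 0 := by linarith [sq_nonneg φ⁻¹]
  have hquad_neg : y ^ 2 + y - 1 < 0 := by nlinarith
  exact (mul_pos_of_neg_of_neg hlin hquad_neg).ne' hfactor

theorem tendsto_iterate_inv_goldenRatio :
    Tendsto (fun n => (fun x : ℝ => 2⁻¹ + 2⁻¹ * x ^ 3)^[n] 0) atTop (𝓝 φ⁻¹) := by
  refine tendsto_iterate_of_isLeast_fixedPt (fun x y hxy => ?_) (by fun_prop) (by norm_num)
    isLeast_fixedPt_inv_goldenRatio
  have hcube : x ^ 3 ≤ y ^ 3 := (Odd.pow_le_pow (by decide)).2 hxy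
  gcongr

end FixedPoint

section CantorSpace

open TopologicalSpace goldenRatio

attribute [local instance] cantorTop cantorBorel

theorem cyl_eq_cylinder {w : List X} {ξ : ℕ → X} (hξ : ξ ∈ cyl w) :
    cyl w = PiNat.cylinder ξ w.length := by
  ext η
  rw [mem_cyl_iff, PiNat.mem_cylinder_iff]
  exact forall₂_congr fun i hi => by rw [mem_cyl_iff.1 hξ i hi, eq_comm]

theorem isOpen_cyl (w : List X) : IsOpen (cyl w) := by
  let _ : TopologicalSpace X := ⊥
  have : DiscreteTopology X := ⟨rfl⟩
  rcases (cyl w).eq_empty_or_nonempty with h | ⟨ξ, hξ⟩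
  · exact h ▸ isOpen_empty
  · rw [cyl_eq_cylinder hξ]
    exact PiNat.isOpen_cylinder (fun _ => X) ξ w.length

theorem isOpen_biUnion_cyl (V : Language X) : IsOpen (⋃ v ∈ V, cyl v) :=
  isOpen_biUnion fun v _ => isOpen_cyl v

theorem isTopologicalBasis_range_cyl : IsTopologicalBasis (range (cyl (X := X))) := by
  let _ : TopologicalSpace X := ⊥
  have : DiscreteTopology X := ⟨rfl⟩
  refine isTopologicalBasis_of_isOpen_of_nhds (forall_mem_range.2 isOpen_cyl) fun ξ U hξ hU => ?_
  obtain ⟨_, ⟨ζ, n, rfl⟩, hζ, hsub⟩ :=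
    (PiNat.isTopologicalBasis_cylinders fun _ : ℕ => X).exists_subset_of_mem_open hξ hU
  have hξn : ξ ∈ cyl (List.ofFn fun i : Fin n => ξ i) := mem_cyl_iff.2 fun i hi => by simp
  refine ⟨_, ⟨_, rfl⟩, hξn, ?_⟩
  rwa [cyl_eq_cylinder hξn, List.length_ofFn, PiNat.mem_cylinder_iff_eq.1 hζ]

instance baireSpace_cantorTop : BaireSpace (ℕ → X) := by
  let _ : TopologicalSpace X := ⊥
  have : DiscreteTopology X := ⟨rfl⟩
  exact (inferInstance : @BaireSpace (ℕ → X) Pi.topologicalSpace)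

theorem exists_cyl_append_subset [Nonempty X] {U : Set (ℕ → X)} (hU : IsOpen U) (hd : Dense U)
    (p : List X) : ∃ y, cyl (p ++ y) ⊆ U := by
  obtain ⟨ξ, hξp, hξU⟩ := hd.inter_open_nonempty _ (isOpen_cyl p) (cyl_nonempty p)
  obtain ⟨_, ⟨q, rfl⟩, hξq, hq⟩ := isTopologicalBasis_range_cyl.exists_subset_of_mem_open hξU hU
  rcases prefix_or_prefix_of_mem_cyl hξp hξq with ⟨y, rfl⟩ | hqp
  · exact ⟨y, hq⟩
  · exact ⟨[], (List.append_nil p).symm ▸ (cyl_anti hqp).trans hq⟩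

theorem dense_iff_forall_cyl [Nonempty X] {s : Set (ℕ → X)} :
    Dense s ↔ ∀ w, (cyl w ∩ s).Nonempty := by
  simp [isTopologicalBasis_range_cyl.dense_iff, cyl_nonempty]

-- Alternate between entering the next dense open set and completing a word of `V`.
theorem exists_mem_omegaPow_wcat_mem_residual [Nonempty X] {V : Language X} {w : List X}
    (hV : ∀ y, ∃ z, w ++ y ++ z ∈ V) {A : Set (ℕ → X)} (hA : A ∈ residual (ℕ → X)) (u : List X) :
    ∃ ξ ∈ omegaPow V, wcat u ξ ∈ A := by
  obtain ⟨B, hBA, hGδ, hdense⟩ := mem_residual.1 hA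
  obtain ⟨U, hU, rfl⟩ := hGδ.eq_iInter_nat
  have hblock (n : ℕ) (p : List X) : ∃ v ∈ V, v ≠ [] ∧ cyl (p ++ v) ⊆ U n := by
    obtain ⟨y, hy⟩ :=
      exists_cyl_append_subset (hU n) (hdense.mono (Set.iInter_subset U n)) (p ++ w)
    obtain ⟨z, hz⟩ := hV (y ++ [Classical.arbitrary X])
    refine ⟨_, hz, by simp, (cyl_anti ?_).trans hy⟩
    simp [List.append_assoc]
  obtain ⟨f, hf⟩ := exists_forall_concatRange
    (P := fun n p v => v ∈ V ∧ v ≠ [] ∧ cyl (p ++ v) ⊆ U n) hblock u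
  obtain ⟨ξ, hξ⟩ := exists_forall_mem_cyl_concatRange fun n => (hf n).2.1
  refine ⟨ξ, ⟨f, fun n => ⟨(hf n).1, (hf n).2.1⟩, hξ⟩, hBA (Set.mem_iInter.2 fun n => ?_)⟩
  refine (hf n).2.2 ?_
  rw [List.append_assoc, wcat_mem_cyl_append_iff, ← concatRange_succ]
  exact hξ (n + 1)

theorem not_isMeagre_catOmega_omegaPow [Nonempty X] {W V : Language X} {u w : List X}
    (hu : u ∈ W) (hV : ∀ y, ∃ z, w ++ y ++ z ∈ V∗) : ¬ IsMeagre (catOmega W (omegaPow V)) := by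
  intro hmeagre
  obtain ⟨ξ, hξ, hmem⟩ := exists_mem_omegaPow_wcat_mem_residual hV hmeagre u
  exact hmem ⟨u, hu, ξ, omegaPow_kstar_subset V hξ, rfl⟩

theorem IsRegOmega.not_isMeagre_of_disjunctive {F : Set (ℕ → X)} (hF : IsRegOmega F) {ξ : ℕ → X}
    (hξF : ξ ∈ F) (hξ : Disjunctive ξ) : ¬ IsMeagre F := by
  have : Nonempty X := ⟨ξ 0⟩
  obtain ⟨n, W, V, hreg, rfl⟩ := hF
  obtain ⟨i, u, hu, ζ, hζ, rfl⟩ := Set.mem_iUnion.1 hξF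
  obtain ⟨w, hw⟩ := exists_dense_prefix_of_isRegular (hreg i).2.star.isRegular
    (hξ.of_wcat.exists_append_mem_kstar hζ)
  exact fun hmeagre => not_isMeagre_catOmega_omegaPow hu hw
    (hmeagre.mono (Set.subset_iUnion (fun i => catOmega (W i) (omegaPow (V i))) i))

theorem not_hasABP_of_isMeagre_of_disjunctive {F : Set (ℕ → X)} (hF : IsMeagre F) {ξ : ℕ → X}
    (hξF : ξ ∈ F) (hξ : Disjunctive ξ) : ¬ HasABP F := by
  rintro ⟨E, F', -, hE, hF', hF'_meagre, hsub⟩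
  have hE_empty : E = ∅ := by
    have hE_meagre : IsMeagre E :=
      (hF.union hF'_meagre).mono fun η hη =>
        or_iff_not_imp_left.2 fun hηF => hsub (.inr ⟨hη, hηF⟩)
    by_contra hne
    exact not_isMeagre_of_isOpen hE (Set.nonempty_iff_ne_empty.2 hne) hE_meagre
  have hξF' : ξ ∈ F' := hsub (.inl ⟨hξF, by simp [hE_empty]⟩)
  exact hF'.not_isMeagre_of_disjunctive hξF' hξ hF'_meagre

theorem V3Eq.dense_biUnion_cyl {V : Language Bool} (hV : V3Eq false true V) :
    Dense (⋃ v ∈ V, cyl v) := by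
  refine dense_iff_forall_cyl.2 fun w => ?_
  obtain ⟨v, hv, z, hvz⟩ := hV.exists_mem_pow_prefix w 1
  rw [pow_one] at hv
  obtain ⟨ξ, hξ⟩ := cyl_nonempty (w ++ z)
  exact ⟨ξ, cyl_anti (List.prefix_append w z) hξ, Set.mem_biUnion hv (cyl_anti hvz hξ)⟩

theorem V3Eq.isClosed_isNowhereDense_compl {V : Language Bool} (hV : V3Eq false true V) :
    IsClosed (⋃ v ∈ V, cyl v)ᶜ ∧ IsNowhereDense (⋃ v ∈ V, cyl v)ᶜ := by
  rw [isClosed_isNowhereDense_iff_compl, compl_compl]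
  exact ⟨isOpen_biUnion_cyl V, hV.dense_biUnion_cyl⟩

instance borelSpace_cantorBorel : BorelSpace (ℕ → X) := ⟨rfl⟩

theorem measure_biUnion_cyl {S : Finset (List X)}
    (hS : IsAntichain (· <+: ·) (S : Set (List X))) (μ : Measure (ℕ → X)) :
    μ (⋃ u ∈ S, cyl u) = ∑ u ∈ S, μ (cyl u) :=
  measure_biUnion_finset
    (fun _ hu _ hv hne => disjoint_cyl (hS hu hv hne) (hS hv hu hne.symm))
    fun u _ => (isOpen_cyl u).measurableSet

variable {a b : X} {V : Language X}

theorem V3Eq.measure_biUnion_cyl_eq (hV : V3Eq a b V) (hab : a ≠ b) {μ : Measure (ℕ → X)}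
    (hμ : ∀ w : List X, μ (cyl w) = (2 : ENNReal)⁻¹ ^ w.length) :
    μ (⋃ v ∈ V, cyl v) = ENNReal.ofReal φ⁻¹ := by
  classical
  have hstages : ⋃ v ∈ V, cyl v = ⋃ n, ⋃ v ∈ depthStage a b n, cyl v := by
    rw [Set.iUnion_comm]
    refine Set.iUnion_congr fun v => ?_
    have : v ∈ V ↔ ∃ n, v ∈ depthStage a b n :=
      ⟨hV.exists_mem_depthStage, fun ⟨n, hn⟩ => hV.coe_depthStage_subset n hn⟩
    simp only [this, Set.iUnion_exists]
  have hmono : Monotone fun n => ⋃ v ∈ depthStage a b n, cyl v :=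
    fun m n h => Set.biUnion_subset_biUnion_left (monotone_depthStage h)
  have hstage (n) : μ (⋃ v ∈ depthStage a b n, cyl v) =
      ENNReal.ofReal ((fun x => 2⁻¹ + 2⁻¹ * x ^ 3)^[n] 0) := by
    rw [measure_biUnion_cyl ((hV.isAntichain hab).subset (hV.coe_depthStage_subset n)),
      ← hV.sum_pow_length_depthStage hab, ENNReal.ofReal_sum_of_nonneg fun _ _ => by positivity]
    simp [hμ, ENNReal.ofReal_pow, ENNReal.ofReal_inv_of_pos, ENNReal.inv_pow]
  rw [hstages]
  refine tendsto_nhds_unique (tendsto_measure_iUnion_atTop hmono) ?_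
  simp only [Function.comp_def, hstage]
  exact ENNReal.tendsto_ofReal tendsto_iterate_inv_goldenRatio

theorem V3Eq.measure_compl_biUnion_cyl (hV : V3Eq a b V) (hab : a ≠ b) {μ : Measure (ℕ → X)}
    (hμ : ∀ w : List X, μ (cyl w) = (2 : ENNReal)⁻¹ ^ w.length) :
    μ (⋃ v ∈ V, cyl v)ᶜ = ENNReal.ofReal ((3 - √5) / 2) := by
  have huniv : μ univ = 1 := by simpa using hμ []
  have hmeas : MeasurableSet (⋃ v ∈ V, cyl v) := (isOpen_biUnion_cyl V).measurableSet
  rw [measure_compl hmeas (by simp [hV.measure_biUnion_cyl_eq hab hμ]), huniv,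
    hV.measure_biUnion_cyl_eq hab hμ, ← ENNReal.ofReal_one,
    ← ENNReal.ofReal_sub 1 (inv_nonneg.2 Real.goldenRatio_pos.le), Real.inv_goldenRatio,
    Real.goldenConj]
  congr 1
  ring

end CantorSpace

theorem stmt19 (V₃ : Language Bool)
    (hfix : V3Eq false true V₃)
    (hleast : ∀ W : Language Bool, V3Eq false true W → ∀ u, u ∈ V₃ → u ∈ W)
    (F₂ : Set (ℕ → Bool)) (hF₂ : F₂ = {ξ : ℕ → Bool | ∃ v ∈ V₃, ξ ∈ cyl v}ᶜ) :
    @IsClosed _ (cantorTop Bool) F₂ ∧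
    @IsNowhereDense _ (cantorTop Bool) F₂ ∧
    (∀ μ : @MeasureTheory.Measure (ℕ → Bool) (cantorBorel Bool),
      (∀ w : List Bool, μ (cyl w) = (2 : ENNReal)⁻¹ ^ w.length) →
        μ F₂ = ENNReal.ofReal ((3 - Real.sqrt 5) / 2)) ∧
    (0 : ℝ) < (3 - Real.sqrt 5) / 2 ∧
    ¬ HasABP F₂ := by
  replace hF₂ : F₂ = (⋃ v ∈ V₃, cyl v)ᶜ := hF₂.trans (by ext; simp)
  subst hF₂
  obtain ⟨hclosed, hnowhere⟩ := hfix.isClosed_isNowhereDense_compl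
  refine ⟨hclosed, hnowhere,
    fun μ hμ => hfix.measure_compl_biUnion_cyl Bool.false_ne_true hμ, ?_, ?_⟩
  · have : √5 < 3 := (Real.sqrt_lt' three_pos).2 (by norm_num)
    linarith
  · obtain ⟨ξ, hξ, hballot⟩ := exists_disjunctive_forall_isBallot Bool.false_ne_true
    refine not_hasABP_of_isMeagre_of_disjunctive hnowhere.isMeagre (ξ := ξ) (fun hmem => ?_) hξ
    obtain ⟨v, hv, hξv⟩ := Set.mem_iUnion₂.1 hmem
    exact hfix.not_isBallot Bool.false_ne_true hv (hballot v hξv)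

end AutoBaire
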